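/- arXiv:2605.22674 — 7 statements merged into one kernel-verified Lean document; each statement's English description precedes it below -/
import Mathlib

section
/- Let (P,d) be a metric space and μ a Borel measure on P such that 0 < μ(B) < ∞ for every open ball B of positive radius. Then L^∞(P,μ) has the Vitali–Carathéodory property if and only if μ({x}) > 0 for every x ∈ P. -/
open MeasureTheory Metric Set ENNReal

/-!
If every point has positive mass, then an almost everywhere inequality holds everywhere, so the
constant `essSup u μ` is itself a lower semicontinuous majorant of `u`. Conversely, if `{x}` is
null then the indicator `u` of `{x}` has essential supremum `0`, while any lower semicontinuous
majorant exceeds `1/2` on a ball around `x`, which has positive measure.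
-/

/-- The Vitali–Carathéodory property for `L^∞(P,μ)` holds if and only if
`μ({x}) > 0` for every `x ∈ P`. -/
theorem stmt_0 {P : Type*} [MetricSpace P] [MeasurableSpace P] [BorelSpace P]
    (μ : Measure P)
    (hball : ∀ (x : P) (r : ℝ), 0 < r → 0 < μ (ball x r) ∧ μ (ball x r) < ⊤) :
    (∀ u : P → ℝ≥0∞, Measurable u →
      essSup u μ =
        ⨅ (v : P → ℝ≥0∞) (_ : LowerSemicontinuous v) (_ : ∀ x, u x ≤ v x), essSup v μ)
    ↔ ∀ x : P, 0 < μ {x} := by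
  constructor
  · intro h x
    by_contra hx
    have hx0 : μ {x} = 0 := by simpa using hx
    have hu := h (indicator {x} 1) (measurable_one.indicator (measurableSet_singleton x))
    have h0 : essSup (indicator {x} (1 : P → ℝ≥0∞)) μ = 0 := by
      rw [ENNReal.essSup_eq_zero_iff]
      exact indicator_meas_zero hx0
    rw [h0] at hu
    have hge : (2⁻¹ : ℝ≥0∞) ≤
        ⨅ (v : P → ℝ≥0∞) (_ : LowerSemicontinuous v)
          (_ : ∀ y, indicator {x} (1 : P → ℝ≥0∞) y ≤ v y), essSup v μ := by
      refine le_iInf fun v => le_iInf fun hv => le_iInf fun huv => ?_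
      have hvx : 2⁻¹ < v x :=
        lt_of_lt_of_le (ENNReal.inv_lt_one.2 ENNReal.one_lt_two) (by simpa using huv x)
      obtain ⟨r, hr, hrv⟩ := Metric.eventually_nhds_iff_ball.1 (hv x _ hvx)
      by_contra! hlt
      -- The ball lies in the null set where `v` exceeds its essential supremum.
      have hnull : μ (ball x r) = 0 :=
        measure_mono_null (fun y hy => hlt.trans (hrv y hy)) (meas_essSup_lt (f := v) (μ := μ))
      exact (hball x r hr).1.ne' hnull
    rw [← hu] at hge
    simp at hge
  · intro h u _
    apply le_antisymm
    · exact le_iInf fun v => le_iInf fun _ => le_iInf fun huv =>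
        essSup_mono_ae (Filter.Eventually.of_forall huv)
    · have hle : ∀ x, u x ≤ essSup u μ := by
        intro x
        by_contra! hlt
        exact (h x).ne' (measure_mono_null (singleton_subset_iff.2 hlt)
          (meas_essSup_lt (f := u) (μ := μ)))
      refine (iInf_le_of_le (fun _ => essSup u μ) <| iInf_le_of_le lowerSemicontinuous_const <|
        iInf_le_of_le hle ?_)
      exact essSup_le_of_ae_le _ (Filter.Eventually.of_forall fun _ => le_rfl)
end

section
/- Let (P,d) be a metric space and μ a Borel measure on P such that μ(B) > 0 for every open ball B of positive radius. Suppose x₀ ∈ P satisfies μ({x₀}) = 0. Then the indicator function χ_{{x₀}} : P → [0,∞] has essSup χ_{{x₀}} μ = 0, yet every lower semicontinuous function v : P → [0,∞] with χ_{{x₀}} ≤ v pointwise satisfies essSup v μ ≥ 1/2. In particular the Vitali–Carathéodory property fails for L^∞(P,μ). -/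
open MeasureTheory Metric Set ENNReal

/-- If every ball of positive radius has positive measure and `μ({x₀}) = 0`, then the
indicator of `{x₀}` has essential supremum `0`, while every lower semicontinuous
majorant `v` of it satisfies `essSup v μ ≥ 1/2`.  In particular the
Vitali–Carathéodory property fails for `L^∞(P,μ)`. -/
theorem stmt_2 {P : Type*} [MetricSpace P] [MeasurableSpace P] [BorelSpace P]
    (μ : Measure P)
    (hball : ∀ (x : P) (r : ℝ), 0 < r → 0 < μ (ball x r))
    (x₀ : P) (hx₀ : μ {x₀} = 0) :
    essSup (Set.indicator {x₀} fun _ => (1 : ℝ≥0∞)) μ = 0 ∧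
    ∀ v : P → ℝ≥0∞, LowerSemicontinuous v →
      (∀ x, Set.indicator {x₀} (fun _ => (1 : ℝ≥0∞)) x ≤ v x) →
      (1 / 2 : ℝ≥0∞) ≤ essSup v μ := by
  constructor
  · rw [ENNReal.essSup_eq_zero_iff]
    have h : ∀ᵐ x ∂μ, x ∉ ({x₀} : Set P) := measure_eq_zero_iff_ae_notMem.mp hx₀
    filter_upwards [h] with x hx
    simp [Set.indicator_of_notMem hx]
  · intro v hv hle
    have h1 : (1 : ℝ≥0∞) ≤ v x₀ := by simpa using hle x₀
    have hlt : (1 / 2 : ℝ≥0∞) < v x₀ := lt_of_lt_of_le (by simp) h1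
    by_contra! hess
    -- Lower semicontinuity gives `v > 1/2` on a whole ball around `x₀`, which has positive
    -- measure, whereas `v < 1/2` almost everywhere.
    obtain ⟨r, hr, hsub⟩ := Metric.eventually_nhds_iff_ball.mp (hv x₀ _ hlt)
    refine (hball x₀ r hr).ne' (measure_mono_null ?_ (ae_iff.mp (ae_lt_of_essSup_lt hess)))
    intro y hy
    exact not_lt.mpr (hsub y hy).le
end

section
/- Let (P,d) be a metric space and μ a Borel measure on P such that 0 < μ(B) < ∞ for every open ball B of positive radius. Then the topological space P is separable and Lindelöf. -/
/-!
A nonempty `P` is the union of the balls `ball x (n + 1)`, each of finite measure, so `μ` is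
σ-finite. A disjoint family of balls, all of positive measure, is therefore countable. By the
Vitali covering lemma, for every `δ > 0` there is a disjoint family of closed `δ`-balls whose
`5`-fold enlargements cover `P`; its centers form a countable `5δ`-net. Countable nets at every
scale make `P` second countable, hence separable and Lindelöf.
-/

open MeasureTheory Metric Set ENNReal

/-- A metric space carrying a Borel measure which is positive and finite on all
balls of positive radius is separable and Lindelöf. -/
theorem stmt_5 {P : Type*} [MetricSpace P] [MeasurableSpace P] [BorelSpace P]
    (μ : Measure P)
    (hball : ∀ (x : P) (r : ℝ), 0 < r → 0 < μ (ball x r) ∧ μ (ball x r) < ⊤) :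
    TopologicalSpace.SeparableSpace P ∧ LindelofSpace P := by
  suffices h : SecondCountableTopology P from ⟨inferInstance, inferInstance⟩
  rcases isEmpty_or_nonempty P with _ | ⟨⟨x₀⟩⟩
  · infer_instance
  have hσ : SigmaFinite μ :=
    ⟨⟨{ set := fun n => ball x₀ ((n : ℝ) + 1)
        set_mem := fun _ => mem_univ _
        finite := fun n => (hball x₀ _ (by positivity)).2
        spanning := by
          refine eq_univ_of_forall fun y => mem_iUnion.2 ?_
          obtain ⟨n, hn⟩ := exists_nat_gt (dist y x₀)
          exact ⟨n, mem_ball.2 (by linarith)⟩ }⟩⟩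
  refine Metric.secondCountable_of_almost_dense_set fun ε hε => ?_
  obtain ⟨u, -, hdisj, hcov⟩ := Vitali.exists_disjoint_subfamily_covering_enlargement_closedBall
    (univ : Set P) id (fun _ => ε / 5) (ε / 5) (fun _ _ => le_rfl) 5 (by norm_num)
  refine ⟨u, ?_, fun x => ?_⟩
  · have hc := Measure.countable_meas_pos_of_disjoint_iUnion (μ := μ)
      (As := fun i : u => closedBall (i : P) (ε / 5)) (fun _ => measurableSet_closedBall)
      (fun i j hij => hdisj i.2 j.2 (Subtype.coe_injective.ne hij))
    have hall : {i : u | 0 < μ (closedBall (i : P) (ε / 5))} = univ :=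
      eq_univ_of_forall fun i =>
        (hball i (ε / 5) (by positivity)).1.trans_le (measure_mono ball_subset_closedBall)
    rw [hall] at hc
    exact countable_coe_iff.1 (countable_univ_iff.1 hc)
  · obtain ⟨b, hb, hsub⟩ := hcov x (mem_univ x)
    have hx := hsub (mem_closedBall_self (by positivity))
    refine ⟨b, hb, ?_⟩
    simp only [mem_closedBall, id] at hx
    linarith
end

section
/- Let (P,d) be a metric space and μ a Borel measure on P such that 0 < μ(B) < ∞ for every open ball B of positive radius. If L^∞(P,μ) has the Vitali–Carathéodory property, then P is a countable set and every continuous map γ : [0,1] → P is constant. -/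
/-!
Under the Vitali–Carathéodory property every measurable null set `N` is empty: a lower
semicontinuous majorant `v` of the indicator of `N` with `essSup v μ < 1` yields an open null
set `{essSup v μ < v} ⊇ N`, and nonempty open sets have positive measure. Hence every point
is an atom, and since `μ` is σ-finite there are only countably many of them. A continuous path
in a countable metric space is constant, because such a space is totally disconnected.
-/

open MeasureTheory Metric Set ENNReal

/-- The Vitali–Carathéodory property, applied to the indicator of `N`, rules out nonempty
measurable null sets as soon as `μ` charges every nonempty open set. -/
theorem eq_empty_of_null_of_vitali {P : Type*} [TopologicalSpace P] [MeasurableSpace P]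
    (μ : Measure P) [μ.IsOpenPosMeasure]
    (hVC : ∀ u : P → ℝ≥0∞, Measurable u →
      essSup u μ =
        ⨅ (v : P → ℝ≥0∞) (_ : LowerSemicontinuous v) (_ : ∀ x, u x ≤ v x), essSup v μ)
    {N : Set P} (hN : MeasurableSet N) (hμ : μ N = 0) : N = ∅ := by
  have hu : essSup (N.indicator (1 : P → ℝ≥0∞)) μ = 0 := by
    rw [ENNReal.essSup_eq_zero_iff]
    exact indicator_meas_zero hμ
  have hlt : (⨅ (v : P → ℝ≥0∞) (_ : LowerSemicontinuous v)
      (_ : ∀ x, N.indicator (1 : P → ℝ≥0∞) x ≤ v x), essSup v μ) < 1 := by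
    rw [← hVC _ (measurable_one.indicator hN), hu]
    exact zero_lt_one
  simp only [iInf_lt_iff] at hlt
  obtain ⟨v, hv, huv, hv1⟩ := hlt
  have hopen : IsOpen {x | essSup v μ < v x} := hv.isOpen_preimage (essSup v μ)
  have hnull : μ {x | essSup v μ < v x} = 0 := meas_essSup_lt
  have hempty := (hopen.measure_eq_zero_iff μ).1 hnull
  refine subset_eq_empty (fun x hx => ?_) hempty
  have h := huv x
  rw [indicator_of_mem hx] at h
  exact hv1.trans_le h

/-- If `L^∞(P,μ)` has the Vitali–Carathéodory property (for a Borel measure which is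
positive and finite on balls of positive radius), then `P` is countable and every
continuous map `[0,1] → P` is constant. -/
theorem stmt_7 {P : Type*} [MetricSpace P] [MeasurableSpace P] [BorelSpace P]
    (μ : Measure P)
    (hball : ∀ (x : P) (r : ℝ), 0 < r → 0 < μ (ball x r) ∧ μ (ball x r) < ⊤)
    (hVC : ∀ u : P → ℝ≥0∞, Measurable u →
      essSup u μ =
        ⨅ (v : P → ℝ≥0∞) (_ : LowerSemicontinuous v) (_ : ∀ x, u x ≤ v x), essSup v μ) :
    Countable P ∧
      ∀ γ : Set.Icc (0 : ℝ) 1 → P, Continuous γ → ∀ s t, γ s = γ t := by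
  have : μ.IsOpenPosMeasure := by
    refine ⟨fun U hU ⟨x, hx⟩ h0 => ?_⟩
    obtain ⟨r, hr, hrU⟩ := Metric.isOpen_iff.1 hU x hx
    exact (hball x r hr).1.ne' (measure_mono_null hrU h0)
  have hatom : ∀ x : P, 0 < μ {x} := fun x => pos_iff_ne_zero.2 fun h =>
    singleton_ne_empty x (eq_empty_of_null_of_vitali μ hVC (measurableSet_singleton x) h)
  have hcount : Countable P := by
    rcases isEmpty_or_nonempty P with hP | ⟨⟨x₀⟩⟩
    · infer_instance
    have : SigmaFinite μ := ⟨⟨{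
      set := fun n => ball x₀ (n + 1)
      set_mem := fun _ => trivial
      finite := fun n => (hball x₀ (n + 1) (by positivity)).2
      spanning := iUnion_ball_nat_succ x₀ }⟩⟩
    have h := Measure.countable_meas_pos_of_disjoint_iUnion (μ := μ)
      (As := fun x : P => ({x} : Set P)) (fun x => measurableSet_singleton x)
      (fun x y hxy => by simpa using hxy)
    simpa [hatom, countable_univ_iff] using h
  refine ⟨hcount, fun γ hγ s t => ?_⟩
  have hpre : IsPreconnected (range γ) := isPreconnected_range hγ
  exact (Set.to_countable (range γ)).isTotallyDisconnected _ subset_rfl hpre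
    (mem_range_self s) (mem_range_self t)
end

section
/- Let (P,d) be a metric space, x₀ ∈ P, r > 0, B = B(x₀,r) the open ball, and E the connected component of x₀ in B. Define u : P → ℝ by u(x) = 1 − d(x,x₀)/r if x ∈ E and u(x) = 0 otherwise. Then for every map γ : ℝ → P that is continuous on [0,1], one has r · |u(γ(1)) − u(γ(0))| ≤ eVariationOn γ [0,1], where the left-hand side is interpreted in [0,∞] via ENNReal.ofReal and eVariationOn γ [0,1] ∈ [0,∞] is the total variation (length) of γ over [0,1]. -/
/-!
Write `E` for the component of `x₀` in the ball. The function `u` is `1/r`-Lipschitz on `E` by the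
triangle inequality, and vanishes off `E`, so only a curve with exactly
one endpoint in `E` needs an argument. Such a curve must leave the ball: otherwise its image would be
a connected subset of the ball meeting `E`, hence contained in `E` (`exists_exit`). If `γ a ∈ E` and
`γ s` is outside the ball, then `r * u (γ a) = r - d(γ a, x₀) ≤ d(γ s, γ a)`, which is at most the
variation.
-/

open Metric Set Classical

noncomputable section

/-- A curve joining a point of the component of `x₀` in the ball to a point outside that component
leaves the ball. -/
lemma exists_exit {P : Type*} [MetricSpace P] {x₀ : P} {r : ℝ} {γ : ℝ → P}
    (hγ : ContinuousOn γ (Set.Icc 0 1)) {a b : ℝ} (ha : a ∈ Set.Icc (0 : ℝ) 1)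
    (hb : b ∈ Set.Icc (0 : ℝ) 1) (hE : γ a ∈ connectedComponentIn (ball x₀ r) x₀)
    (hnE : γ b ∉ connectedComponentIn (ball x₀ r) x₀) :
    ∃ s ∈ Set.Icc (0 : ℝ) 1, r ≤ dist (γ s) x₀ := by
  by_contra! h
  apply hnE
  rw [connectedComponentIn_eq hE]
  refine (isPreconnected_Icc.image γ hγ).subset_connectedComponentIn (mem_image_of_mem γ ha) ?_
    (mem_image_of_mem γ hb)
  rintro _ ⟨s, hs, rfl⟩
  exact mem_ball.2 (h s hs)

/-- If a curve passes through `γ a` in the component and through some point outside the component,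
its length is at least `r - d(γ a, x₀)`, since it has to reach the complement of the ball. -/
lemma ofReal_sub_dist_le {P : Type*} [MetricSpace P] {x₀ : P} {r : ℝ} {γ : ℝ → P}
    (hγ : ContinuousOn γ (Set.Icc 0 1)) {a b : ℝ} (ha : a ∈ Set.Icc (0 : ℝ) 1)
    (hb : b ∈ Set.Icc (0 : ℝ) 1) (hE : γ a ∈ connectedComponentIn (ball x₀ r) x₀)
    (hnE : γ b ∉ connectedComponentIn (ball x₀ r) x₀) :
    ENNReal.ofReal (r - dist (γ a) x₀) ≤ eVariationOn γ (Set.Icc 0 1) := by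
  obtain ⟨s, hs, hrs⟩ := exists_exit hγ ha hb hE hnE
  refine le_trans ?_ (eVariationOn.edist_le γ hs ha)
  rw [edist_dist]
  apply ENNReal.ofReal_le_ofReal
  linarith [dist_triangle (γ s) (γ a) x₀]

/-- Let `E` be the connected component of `x₀` in the ball `B(x₀,r)` and let
`u(x) = 1 - d(x,x₀)/r` on `E` and `u = 0` elsewhere.  Then `1/r` is an upper
gradient of `u`: for every curve `γ` continuous on `[0,1]`,
`r · |u(γ 1) - u(γ 0)| ≤ eVariationOn γ [0,1]`. -/
theorem stmt_9 {P : Type*} [MetricSpace P] (x₀ : P) (r : ℝ) (hr : 0 < r)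
    (u : P → ℝ)
    (hu : u = fun x =>
      if x ∈ connectedComponentIn (ball x₀ r) x₀ then 1 - dist x x₀ / r else 0) :
    ∀ γ : ℝ → P, ContinuousOn γ (Set.Icc 0 1) →
      ENNReal.ofReal (r * |u (γ 1) - u (γ 0)|) ≤ eVariationOn γ (Set.Icc 0 1) := by
  intro γ hγ
  have h0 : (0 : ℝ) ∈ Set.Icc (0 : ℝ) 1 := by simp
  have h1 : (1 : ℝ) ∈ Set.Icc (0 : ℝ) 1 := by simp
  -- On `E` the values of `u` are nonnegative, so the absolute value can be dropped.
  have hpos : ∀ x ∈ connectedComponentIn (ball x₀ r) x₀,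
      r * |1 - dist x x₀ / r| = r - dist x x₀ := by
    intro x hx
    have hlt : dist x x₀ < r := mem_ball.1 (connectedComponentIn_subset _ _ hx)
    rw [abs_of_nonneg (sub_nonneg.2 ((div_le_one hr).2 hlt.le))]
    field_simp
  subst hu
  by_cases hE1 : γ 1 ∈ connectedComponentIn (ball x₀ r) x₀ <;>
    by_cases hE0 : γ 0 ∈ connectedComponentIn (ball x₀ r) x₀
  · simp only [hE1, hE0, if_true]
    refine le_trans ?_ (eVariationOn.edist_le γ h1 h0)
    rw [edist_dist]
    apply ENNReal.ofReal_le_ofReal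
    calc r * |1 - dist (γ 1) x₀ / r - (1 - dist (γ 0) x₀ / r)|
        = |dist (γ 0) x₀ - dist (γ 1) x₀| := by
          rw [← abs_of_pos hr, ← abs_mul, abs_of_pos hr]
          congr 1
          field_simp
          ring
      _ ≤ dist (γ 0) (γ 1) := abs_dist_sub_le _ _ _
      _ = dist (γ 1) (γ 0) := dist_comm _ _
  · simp only [hE1, hE0, if_true, if_false, sub_zero]
    rw [hpos _ hE1]
    exact ofReal_sub_dist_le hγ h1 h0 hE1 hE0
  · simp only [hE1, hE0, if_true, if_false, zero_sub, abs_neg]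
    rw [hpos _ hE0]
    exact ofReal_sub_dist_le hγ h0 h1 hE0 hE1
  · simp [hE1, hE0]
end
end

section
/- Let (P,d) be a metric space that is not locally connected, i.e. there exist x₀ ∈ P and r₀ > 0 such that no connected set G ⊆ B(x₀,r₀) is a neighbourhood of x₀. Then there exist r > 0 and a function u : P → ℝ with 0 ≤ u ≤ 1 such that u is not continuous, and for every map γ : ℝ → P that is continuous on [0,1] one has r · |u(γ(1)) − u(γ(0))| ≤ eVariationOn γ [0,1] (the left-hand side interpreted in [0,∞] via ENNReal.ofReal). In particular u admits the constant 1/r as an upper gradient, so u ∈ N^{1,∞}(P), yet u is not continuous. -/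
open Metric Set

/-! Let `G` be the connected component of `x₀` in `ball x₀ r₀`, and let `u` be the cone
`1 - dist x x₀ / r₀` on `G`, extended by `0`; take `r = r₀`. Since `{u > 0} = G`, continuity of `u`
would make `G` an open connected neighbourhood of `x₀` inside the ball, which is excluded.

For the variation bound, a curve that stays in the ball has connected image, so its endpoints lie
both in `G`, where `r₀ * u` is 1-Lipschitz, or both outside `G`, where `u = 0`. If the curve meets
a point `γ t` outside the ball, then `r₀ * u (γ s) ≤ dist (γ s) (γ t)` for both endpoints `s`, and
each such distance is at most the variation. -/

/-- If `P` is not locally connected at some point `x₀` (witnessed by a radius `r₀`),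
then there are `r > 0` and a function `u : P → ℝ` with values in `[0,1]` which is
not continuous but has the constant `1/r` as an upper gradient:
`r · |u(γ 1) - u(γ 0)| ≤ eVariationOn γ [0,1]` for every curve `γ` continuous on `[0,1]`.
Hence `u ∈ N^{1,∞}(P)` is not continuous. -/
theorem stmt_11 {P : Type*} [MetricSpace P] (x₀ : P) (r₀ : ℝ) (hr₀ : 0 < r₀)
    (h : ∀ G : Set P, G ⊆ ball x₀ r₀ → IsConnected G → x₀ ∉ interior G) :
    ∃ (r : ℝ) (u : P → ℝ), 0 < r ∧ (∀ x, 0 ≤ u x ∧ u x ≤ 1) ∧ ¬ Continuous u ∧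
      ∀ γ : ℝ → P, ContinuousOn γ (Set.Icc 0 1) →
        ENNReal.ofReal (r * |u (γ 1) - u (γ 0)|) ≤ eVariationOn γ (Set.Icc 0 1) := by
  classical
  set G := connectedComponentIn (ball x₀ r₀) x₀ with hG
  have hx₀ : x₀ ∈ ball x₀ r₀ := mem_ball_self hr₀
  have hGb : G ⊆ ball x₀ r₀ := connectedComponentIn_subset _ _
  have hGx : x₀ ∈ G := mem_connectedComponentIn hx₀
  set u : P → ℝ := G.indicator (fun x => 1 - dist x x₀ / r₀) with hu
  have hu_in : ∀ x ∈ G, r₀ * u x = r₀ - dist x x₀ := by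
    intro x hx
    rw [hu, indicator_of_mem hx]
    field_simp
  have hu_out : ∀ x, x ∉ G → u x = 0 := fun x hx => indicator_of_notMem hx _
  have hu_pos : ∀ x ∈ G, 0 < u x := by
    intro x hx
    have h1 := hu_in x hx
    have h2 := mem_ball.1 (hGb hx)
    exact pos_of_mul_pos_right (by linarith : 0 < r₀ * u x) hr₀.le
  have hu0 : ∀ x, 0 ≤ u x := by
    intro x
    by_cases hx : x ∈ G
    · exact (hu_pos x hx).le
    · exact (hu_out x hx).ge
  refine ⟨r₀, u, hr₀, fun x => ⟨hu0 x, ?_⟩, ?_, ?_⟩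
  · by_cases hx : x ∈ G
    · have h1 := hu_in x hx
      have h2 : 0 ≤ dist x x₀ := dist_nonneg
      exact le_of_mul_le_mul_left (by linarith : r₀ * u x ≤ r₀ * 1) hr₀
    · rw [hu_out x hx]
      exact zero_le_one
  · intro hc
    have hGeq : G = u ⁻¹' Ioi 0 := by
      ext x
      refine ⟨hu_pos x, fun hx => ?_⟩
      by_contra hxG
      exact (mem_Ioi.1 hx).ne' (hu_out x hxG)
    have hGo : IsOpen G := hGeq ▸ isOpen_Ioi.preimage hc
    exact h G hGb (isConnected_connectedComponentIn_iff.2 hx₀) (hGo.interior_eq.symm ▸ hGx)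
  · intro γ hγ
    have m0 : (0 : ℝ) ∈ Icc (0 : ℝ) 1 := left_mem_Icc.2 zero_le_one
    have m1 : (1 : ℝ) ∈ Icc (0 : ℝ) 1 := right_mem_Icc.2 zero_le_one
    have key : ∀ s ∈ Icc (0 : ℝ) 1, ∀ t ∈ Icc (0 : ℝ) 1, ∀ a, a ≤ dist (γ s) (γ t) →
        ENNReal.ofReal a ≤ eVariationOn γ (Icc 0 1) := by
      intro s hs t ht a ha
      refine (ENNReal.ofReal_le_ofReal ha).trans ?_
      rw [← edist_dist]
      exact eVariationOn.edist_le γ hs ht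
    have habs : r₀ * |u (γ 1) - u (γ 0)| = |r₀ * u (γ 1) - r₀ * u (γ 0)| := by
      rw [← mul_sub, abs_mul, abs_of_pos hr₀]
    rw [habs]
    by_cases hstay : γ '' Icc 0 1 ⊆ ball x₀ r₀
    · have hpre : IsPreconnected (γ '' Icc 0 1) := isPreconnected_Icc.image γ hγ
      -- A preconnected subset of the ball that meets `G` is contained in `G`.
      have hsub : ∀ s ∈ Icc (0 : ℝ) 1, γ s ∈ G → γ '' Icc 0 1 ⊆ G := by
        intro s hs hsG
        rw [hG, connectedComponentIn_eq hsG]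
        exact hpre.subset_connectedComponentIn (mem_image_of_mem γ hs) hstay
      by_cases h0 : γ 0 ∈ G
      · have h1 : γ 1 ∈ G := hsub 0 m0 h0 (mem_image_of_mem γ m1)
        refine key 1 m1 0 m0 _ ?_
        rw [hu_in _ h0, hu_in _ h1, sub_sub_sub_cancel_left, abs_sub_comm]
        exact abs_dist_sub_le _ _ _
      · have h1 : γ 1 ∉ G := fun h1 => h0 (hsub 1 m1 h1 (mem_image_of_mem γ m0))
        rw [hu_out _ h0, hu_out _ h1]
        simp
    · obtain ⟨_, ⟨t, ht, rfl⟩, hout⟩ := not_subset.1 hstay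
      have hfar : r₀ ≤ dist (γ t) x₀ := not_lt.1 hout
      have hle : ∀ s, r₀ * u (γ s) ≤ dist (γ s) (γ t) := by
        intro s
        by_cases hs : γ s ∈ G
        · rw [hu_in _ hs]
          linarith [dist_triangle_left (γ t) x₀ (γ s)]
        · rw [hu_out _ hs, mul_zero]
          exact dist_nonneg
      have n0 := mul_nonneg hr₀.le (hu0 (γ 0))
      have n1 := mul_nonneg hr₀.le (hu0 (γ 1))
      rcases le_total (r₀ * u (γ 0)) (r₀ * u (γ 1)) with hc | hc
      · refine key 1 m1 t ht _ ?_
        rw [abs_of_nonneg (sub_nonneg.2 hc)]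
        linarith [hle 1]
      · refine key 0 m0 t ht _ ?_
        rw [abs_of_nonpos (sub_nonpos.2 hc)]
        linarith [hle 0]
end

section
/- Let (P,d) be a metric space and μ a Borel measure on P such that 0 < μ(B) < ∞ for every open ball B of positive radius. Then the following are equivalent: (i) for every bounded measurable function u : P → ℝ and every ε > 0 there is a bounded continuous function f : P → ℝ with essSup |u − f| μ ≤ ε (continuous functions are dense in L^∞(P,μ)); (ii) every point of P is isolated, i.e. every singleton {x} is open in P. -/
/-!
If every singleton is open, the topology is discrete, every function is continuous, and `u`
approximates itself.

Conversely, let `x` be a non-isolated point. There are points `s n ≠ x` tending to `x`, with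
`dist (s (n + 1)) x < dist (s n) x / 2`, so that the balls of radius `dist (s n) x / 4` about `s n`
are pairwise disjoint (`exists_seq_disjoint_balls`). Let `u` be the indicator of the union of the
even-numbered balls. Each ball has positive measure, so if `f` is within `1 / 3` of `u` almost
everywhere, then every even ball contains a point where `f ≥ 2 / 3` and every odd ball a point
where `f ≤ 1 / 3`. These points tend to `x`, so `f` is not continuous at `x`.
-/

open MeasureTheory Metric Set ENNReal

/-- Around a non-isolated point `x` there are pairwise disjoint balls, of positive radius,
shrinking to `x`. -/
lemma exists_seq_disjoint_balls {P : Type*} [MetricSpace P] (x : P)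
    (hx : ∀ ε : ℝ, 0 < ε → ∃ y, y ≠ x ∧ dist y x < ε) :
    ∃ (s : ℕ → P) (r : ℕ → ℝ), (∀ n, 0 < r n) ∧
      (∀ n m, n ≠ m → Disjoint (ball (s n) (r n)) (ball (s m) (r m))) ∧
      ∀ δ : ℝ, 0 < δ → ∃ N, ∀ n, N ≤ n → ball (s n) (r n) ⊆ ball x δ := by
  have : Nonempty P := ⟨x⟩
  choose! g hg_ne hg_lt using hx
  obtain ⟨y₀, hy₀⟩ : ∃ y, y ≠ x := ⟨g 1, hg_ne 1 one_pos⟩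
  let s : ℕ → P := fun n => Nat.rec y₀ (fun _ y => g (dist y x / 2)) n
  have hs_succ : ∀ n, s (n + 1) = g (dist (s n) x / 2) := fun _ => rfl
  have hs_pos : ∀ n, 0 < dist (s n) x := by
    intro n
    induction n with
    | zero => exact dist_pos.2 hy₀
    | succ n ih => rw [hs_succ]; exact dist_pos.2 (hg_ne _ (half_pos ih))
  have hs_lt : ∀ n, dist (s (n + 1)) x < dist (s n) x / 2 := fun n => by
    rw [hs_succ]; exact hg_lt _ (half_pos (hs_pos n))
  have hs_anti : Antitone fun n => dist (s n) x :=
    antitone_nat_of_succ_le fun n => by linarith [hs_lt n, hs_pos n]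
  have hdisj : ∀ n m, n < m →
      Disjoint (ball (s n) (dist (s n) x / 4)) (ball (s m) (dist (s m) x / 4)) := by
    intro n m hnm
    have h₁ : dist (s m) x ≤ dist (s (n + 1)) x := hs_anti hnm
    apply ball_disjoint_ball
    linarith [hs_lt n, hs_pos n, dist_triangle (s n) (s m) x]
  refine ⟨s, fun n => dist (s n) x / 4, fun n => by linarith [hs_pos n], ?_, ?_⟩
  · intro n m hnm
    rcases hnm.lt_or_gt with h | h
    · exact hdisj n m h
    · exact (hdisj m n h).symm
  · intro δ hδ
    have hgeom : ∀ n, dist (s n) x ≤ dist (s 0) x * (1 / 2) ^ n := by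
      intro n
      induction n with
      | zero => simp
      | succ n ih => rw [pow_succ]; linarith [hs_lt n]
    obtain ⟨N, hN⟩ := exists_pow_lt_of_lt_one
      (show 0 < δ / 2 / dist (s 0) x by have := hs_pos 0; positivity)
      (show (1 / 2 : ℝ) < 1 by norm_num)
    rw [lt_div_iff₀ (hs_pos 0)] at hN
    refine ⟨N, fun n hn => ball_subset_ball' ?_⟩
    have h₁ : dist (s n) x ≤ dist (s N) x := hs_anti hn
    linarith [hgeom N, hs_pos n]

/-- For a metric space `P` with a Borel measure `μ` which is positive and finite
on balls of positive radius, continuous functions are dense in `L^∞(P,μ)`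
(every bounded measurable function can be approximated in essential supremum
norm, to within any `ε > 0`, by a bounded continuous one) if and only if every
point of `P` is isolated. -/
theorem stmt_15 {P : Type*} [MetricSpace P] [MeasurableSpace P] [BorelSpace P]
    (μ : Measure P)
    (hball : ∀ (x : P) (r : ℝ), 0 < r → 0 < μ (ball x r) ∧ μ (ball x r) < ⊤) :
    (∀ u : P → ℝ, Measurable u → (∃ C : ℝ, ∀ x, |u x| ≤ C) →
      ∀ ε : ℝ, 0 < ε →
        ∃ f : P → ℝ, Continuous f ∧ (∃ C : ℝ, ∀ x, |f x| ≤ C) ∧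
          essSup (fun x => ENNReal.ofReal |u x - f x|) μ ≤ ENNReal.ofReal ε)
    ↔ ∀ x : P, IsOpen ({x} : Set P) := by
  constructor
  · intro h x
    by_contra hx
    have hx' : ∀ ε : ℝ, 0 < ε → ∃ y, y ≠ x ∧ dist y x < ε := by
      intro ε hε
      by_contra! hcon
      apply hx
      rw [Metric.isOpen_singleton_iff]
      refine ⟨ε, hε, fun y hy => ?_⟩
      by_contra hne
      exact (hcon y hne).not_gt hy
    obtain ⟨s, r, hr, hdisj, hshrink⟩ := exists_seq_disjoint_balls x hx'
    set A : Set P := ⋃ n : ℕ, ball (s (2 * n)) (r (2 * n)) with hA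
    have hAm : MeasurableSet A := (isOpen_iUnion fun _ => isOpen_ball).measurableSet
    obtain ⟨f, hf, -, hess⟩ := h (A.indicator fun _ => 1) (measurable_const.indicator hAm)
      ⟨1, fun y => by by_cases hy : y ∈ A <;> simp [hy]⟩ (1 / 3) (by norm_num)
    have hae : ∀ᵐ y ∂μ, |A.indicator (fun _ => (1 : ℝ)) y - f y| ≤ 1 / 3 := by
      filter_upwards [ENNReal.ae_le_essSup
        (μ := μ) fun y => ENNReal.ofReal |A.indicator (fun _ => (1 : ℝ)) y - f y|] with y hy
      exact (ENNReal.ofReal_le_ofReal_iff (by norm_num)).1 (hy.trans hess)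
    have hpt : ∀ n, ∃ y ∈ ball (s n) (r n),
        |A.indicator (fun _ => (1 : ℝ)) y - f y| ≤ 1 / 3 := fun n =>
      ((frequently_ae_mem_iff.2 (hball (s n) (r n) (hr n)).1.ne').and_eventually hae).exists
    obtain ⟨δ, hδ, hfδ⟩ := Metric.continuousAt_iff.1 (hf.continuousAt (x := x)) (1 / 6)
      (by norm_num)
    obtain ⟨N, hN⟩ := hshrink δ hδ
    obtain ⟨p, hp, hfp⟩ := hpt (2 * N)
    obtain ⟨q, hq, hfq⟩ := hpt (2 * N + 1)
    have hpA : p ∈ A := mem_iUnion.2 ⟨N, hp⟩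
    have hqA : q ∉ A := by
      intro hqA
      obtain ⟨k, hk⟩ := mem_iUnion.1 hqA
      exact disjoint_left.1 (hdisj (2 * N + 1) (2 * k) (by omega)) hq hk
    have hp' := hfδ (hN (2 * N) (by omega) hp)
    have hq' := hfδ (hN (2 * N + 1) (by omega) hq)
    rw [indicator_of_mem hpA, abs_le] at hfp
    rw [indicator_of_notMem hqA, abs_le] at hfq
    rw [Real.dist_eq, abs_lt] at hp' hq'
    linarith [hfp.2, hfq.1, hp'.2, hq'.1]
  · intro h u _ hb ε _
    have : DiscreteTopology P := discreteTopology_iff_isOpen_singleton.2 h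
    exact ⟨u, continuous_of_discreteTopology, hb, essSup_le_of_ae_le _ (.of_forall fun y => by simp)⟩
end
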